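/- arXiv:2202.08941 — 3 statements merged into one kernel-verified Lean document; each statement's English description precedes it below -/
import Mathlib

section
/- Let G be a negative definite symmetric integer matrix on a finite set V with G(v₁,v₂) = 1, and let G' on V' = V ∪ {e} be the blow-up of G along the edge v₁v₂. Then for every characteristic vector (K,p₁,p₂,j) of G' and every E ⊆ V (so e ∉ E), h_U([(K,p₁+j,p₂+j), E]) ≥ h'_U([(K,p₁,p₂,j), E]); that is, the blow-down projection P induces a filtered map on the lattice complexes (all the associated U-exponents are nonnegative). -/
/-!
Over the integers the blow-up splits orthogonally: with `c` the indicator of `{v₁, v₂}`, the form of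
`G'` at `(x, t)` is `xᵀ G x - (t - c·x)²`, so `G' ≅ G ⊕ ⟨-1⟩`. Under this splitting a characteristic
vector `K'` with value `j` on the new vertex corresponds to `(P K', j)`, whence
`h'_U(K') = h_U(P K') + (1 - j²)/4` (`hU_blowupE`). Since `j` is odd, `h'_U(K') ≤ h_U(P K')`.
Moreover `P` commutes with translation by old vertices (`blowdown_chTrans`), and translation preserves
the parity of `j`, so the inequality holds at every vertex of the cube, hence for the minima.
-/

open Matrix Finset

variable {V : Type*}

/-- Negative definiteness of a symmetric integer matrix, as a quadratic form over `ℚ`. -/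
def MatNegDef [Fintype V] (G : Matrix V V ℤ) : Prop :=
  ∀ x : V → ℚ, x ≠ 0 → x ⬝ᵥ (G.map (Int.cast : ℤ → ℚ)).mulVec x < 0

/-- `K` is a characteristic vector for `G`: `K v ≡ G v v (mod 2)` for all `v`. -/
def IsCharacteristic [Fintype V] (G : Matrix V V ℤ) (K : V → ℤ) : Prop :=
  ∀ v : V, (2 : ℤ) ∣ (K v - G v v)

/-- The translate `K + x` of a characteristic vector by `x : V → ℤ`. -/
def chTrans [Fintype V] (G : Matrix V V ℤ) (K : V → ℤ) (x : V → ℤ) : V → ℤ :=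
  fun u => K u + 2 * G.mulVec x u

/-- `i` times the standard basis vector at `v`. -/
def dirVec [DecidableEq V] (v : V) (i : ℤ) : V → ℤ := fun u => if u = v then i else 0

/-- The height function `h_U(K) = (Kᵀ G⁻¹ K + s)/4`. -/
noncomputable def hU [Fintype V] [DecidableEq V] (G : Matrix V V ℤ) (K : V → ℤ) : ℚ :=
  ((fun u => (K u : ℚ)) ⬝ᵥ ((G.map (Int.cast : ℤ → ℚ))⁻¹).mulVec (fun u => (K u : ℚ))
      + (Fintype.card V : ℚ)) / 4

/-- The height of a cube: `h_U([K,E]) = min_{I ⊆ E} h_U(K + Σ_{v ∈ I} e_v)`. -/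
noncomputable def hUcube [Fintype V] [DecidableEq V] (G : Matrix V V ℤ) (K : V → ℤ)
    (E : Finset V) : ℚ :=
  E.powerset.inf' (Finset.powerset_nonempty _)
    (fun I => hU G (chTrans G K (fun u => if u ∈ I then (1 : ℤ) else 0)))

/-- The blow-up `G'` of `G` along the edge `v₁v₂`; `none` is the new vertex `e`. -/
def blowupE [DecidableEq V] (G : Matrix V V ℤ) (v₁ v₂ : V) :
    Matrix (Option V) (Option V) ℤ :=
  Matrix.of fun u w =>
    match u, w with
    | none, none => -1
    | none, some x => if x = v₁ ∨ x = v₂ then 1 else 0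
    | some x, none => if x = v₁ ∨ x = v₂ then 1 else 0
    | some x, some y =>
        if (x = v₁ ∧ y = v₂) ∨ (x = v₂ ∧ y = v₁) then 0
        else if x = y then (if x = v₁ ∨ x = v₂ then G x y - 1 else G x y)
        else G x y

/-- The blow-down projection `P`, sending `(K,p₁,p₂,j)` to `(K,p₁+j,p₂+j)`. -/
def blowdown [DecidableEq V] (v₁ v₂ : V) (K' : Option V → ℤ) : V → ℤ :=
  fun u => if u = v₁ ∨ u = v₂ then K' (some u) + K' none else K' (some u)

/-- The embedding of the old vertex set into the vertex set of the blow-up. -/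
def someEmb (V : Type*) : V ↪ Option V := ⟨some, Option.some_injective V⟩

/-- The sum over `w` of a function supported on two distinct points, in indicator form. -/
lemma sum_pair_indicator {R : Type*} [CommRing R] [Fintype V] [DecidableEq V] {v₁ v₂ : V}
    (hne : v₁ ≠ v₂) (x : V → R) :
    ∑ w, (if w = v₁ ∨ w = v₂ then (1 : R) else 0) * x w = x v₁ + x v₂ := by
  rw [← Finset.sum_pair hne, ← Finset.sum_subset (Finset.subset_univ {v₁, v₂})]
  · exact Finset.sum_congr rfl fun w hw => by simp_all
  · intro w _ hw
    simp_all

/-- The old block of the blow-up is `G - c cᵀ`, with `c` the indicator of `{v₁, v₂}`. -/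
lemma blowupE_some_some [DecidableEq V] (G : Matrix V V ℤ) (hsym : G.IsSymm) {v₁ v₂ : V}
    (hne : v₁ ≠ v₂) (hedge : G v₁ v₂ = 1) (u w : V) :
    blowupE G v₁ v₂ (some u) (some w) = G u w
      - (if u = v₁ ∨ u = v₂ then 1 else 0) * (if w = v₁ ∨ w = v₂ then 1 else 0) := by
  have hedge' : G v₂ v₁ = 1 := by rw [← hedge]; exact hsym.apply v₁ v₂
  simp only [blowupE, Matrix.of_apply]
  grind

lemma blowupE_mulVec_none {R : Type*} [CommRing R] [Fintype V] [DecidableEq V]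
    (G : Matrix V V ℤ) {v₁ v₂ : V} (hne : v₁ ≠ v₂) (y : Option V → R) :
    ((blowupE G v₁ v₂).map (Int.cast : ℤ → R)).mulVec y none
      = y (some v₁) + y (some v₂) - y none := by
  rw [← sum_pair_indicator hne fun w => y (some w)]
  simp [Matrix.mulVec, dotProduct, Fintype.sum_option, blowupE]
  ring

lemma blowupE_mulVec_some {R : Type*} [CommRing R] [Fintype V] [DecidableEq V]
    (G : Matrix V V ℤ) (hsym : G.IsSymm) {v₁ v₂ : V} (hne : v₁ ≠ v₂) (hedge : G v₁ v₂ = 1)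
    (y : Option V → R) (u : V) :
    ((blowupE G v₁ v₂).map (Int.cast : ℤ → R)).mulVec y (some u)
      = (G.map (Int.cast : ℤ → R)).mulVec (fun w => y (some w)) u
        - (if u = v₁ ∨ u = v₂ then 1 else 0) * (y (some v₁) + y (some v₂) - y none) := by
  have h0 : blowupE G v₁ v₂ (some u) none = if u = v₁ ∨ u = v₂ then 1 else 0 := rfl
  rw [← sum_pair_indicator hne fun w => y (some w)]
  simp only [Matrix.mulVec, dotProduct, Fintype.sum_option, Matrix.map_apply, h0,
    blowupE_some_some G hsym hne hedge, Int.cast_sub, Int.cast_mul, Int.cast_ite, Int.cast_one,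
    Int.cast_zero, sub_mul, mul_sub, Finset.sum_sub_distrib, Finset.mul_sum, mul_assoc]
  ring

/-- A matrix over a field with trivial kernel is invertible. -/
lemma isUnit_det_of_ker {ι : Type*} [Fintype ι] [DecidableEq ι] (A : Matrix ι ι ℚ)
    (h : ∀ x, A.mulVec x = 0 → x = 0) : IsUnit A.det := by
  rw [isUnit_iff_ne_zero]
  intro hdet
  obtain ⟨x, hx, hAx⟩ := Matrix.exists_mulVec_eq_zero_iff.2 hdet
  exact hx (h x hAx)

lemma eq_zero_of_mulVec_eq_zero [Fintype V] {G : Matrix V V ℤ} (hneg : MatNegDef G) (x : V → ℚ)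
    (hx : (G.map (Int.cast : ℤ → ℚ)).mulVec x = 0) : x = 0 := by
  by_contra h
  simpa [hx] using hneg x h

lemma blowupE_eq_zero_of_mulVec_eq_zero [Fintype V] [DecidableEq V]
    {G : Matrix V V ℤ} (hsym : G.IsSymm) (hneg : MatNegDef G) {v₁ v₂ : V} (hne : v₁ ≠ v₂)
    (hedge : G v₁ v₂ = 1) (y : Option V → ℚ)
    (hy : ((blowupE G v₁ v₂).map (Int.cast : ℤ → ℚ)).mulVec y = 0) : y = 0 := by
  have hn := congrFun hy none
  rw [blowupE_mulVec_none G hne, Pi.zero_apply] at hn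
  have hx : (fun w => y (some w)) = 0 := by
    refine eq_zero_of_mulVec_eq_zero hneg _ (funext fun u => ?_)
    have hu := congrFun hy (some u)
    rwa [blowupE_mulVec_some G hsym hne hedge, hn, mul_zero, sub_zero] at hu
  have hx' : ∀ w, y (some w) = 0 := congrFun hx
  funext w
  cases w with
  | none => simpa [hx'] using hn
  | some w => exact hx' w

/-- The height of a characteristic vector of the blow-up in terms of its blow-down. -/
lemma hU_blowupE [Fintype V] [DecidableEq V]
    (G : Matrix V V ℤ) (hsym : G.IsSymm) (hneg : MatNegDef G)
    {v₁ v₂ : V} (hne : v₁ ≠ v₂) (hedge : G v₁ v₂ = 1) (K' : Option V → ℤ) :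
    hU (blowupE G v₁ v₂) K' = hU G (blowdown v₁ v₂ K') + (1 - (K' none : ℚ) ^ 2) / 4 := by
  set A := G.map (Int.cast : ℤ → ℚ) with hA
  set B := (blowupE G v₁ v₂).map (Int.cast : ℤ → ℚ) with hB
  have hAu : IsUnit A.det := isUnit_det_of_ker A (eq_zero_of_mulVec_eq_zero hneg)
  have hBu : IsUnit B.det :=
    isUnit_det_of_ker B (blowupE_eq_zero_of_mulVec_eq_zero hsym hneg hne hedge)
  set k : V → ℚ := fun u => (blowdown v₁ v₂ K' u : ℚ) with hk
  set x : V → ℚ := A⁻¹.mulVec k with hx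
  have hAx : A.mulVec x = k := by
    rw [hx, Matrix.mulVec_mulVec, Matrix.mul_nonsing_inv _ hAu, Matrix.one_mulVec]
  -- The solution of `G' y = K'` extends `x = G⁻¹ (P K')`; the row of the new vertex forces `y none`.
  let y : Option V → ℚ := fun o => o.elim (x v₁ + x v₂ - K' none) x
  have hBy : B.mulVec y = fun u => (K' u : ℚ) := by
    funext u
    cases u with
    | none =>
      rw [hB, blowupE_mulVec_none G hne]
      simp [y]
    | some u =>
      rw [hB, blowupE_mulVec_some G hsym hne hedge]
      change A.mulVec x u - _ = _
      rw [hAx]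
      simp only [hk, blowdown, y, Option.elim]
      split_ifs <;> push_cast <;> ring
  have hy : B⁻¹.mulVec (fun u => (K' u : ℚ)) = y := by
    rw [← hBy, Matrix.mulVec_mulVec, Matrix.nonsing_inv_mul _ hBu, Matrix.one_mulVec]
  have hsum : (fun u => (K' u : ℚ)) ⬝ᵥ y = k ⬝ᵥ x - (K' none : ℚ) ^ 2 := by
    have hkx : k ⬝ᵥ x = ∑ w, (K' (some w) : ℚ) * x w + K' none * (x v₁ + x v₂) := by
      rw [← sum_pair_indicator hne x, Finset.mul_sum, ← Finset.sum_add_distrib]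
      refine Finset.sum_congr rfl fun w _ => ?_
      simp only [hk, blowdown]
      split_ifs <;> push_cast <;> ring
    rw [hkx, dotProduct, Fintype.sum_option]
    simp only [y, Option.elim]
    ring
  unfold hU
  rw [← hA, ← hB, hy, hsum, Fintype.card_option]
  push_cast
  ring

/-- The blow-down commutes with translation by a subset of the old vertices. -/
lemma blowdown_chTrans [Fintype V] [DecidableEq V]
    (G : Matrix V V ℤ) (hsym : G.IsSymm)
    {v₁ v₂ : V} (hne : v₁ ≠ v₂) (hedge : G v₁ v₂ = 1) (K' : Option V → ℤ) (I : Finset V) :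
    blowdown v₁ v₂ (chTrans (blowupE G v₁ v₂) K'
        (fun u => if u ∈ I.map (someEmb V) then (1 : ℤ) else 0))
      = chTrans G (blowdown v₁ v₂ K') (fun u => if u ∈ I then (1 : ℤ) else 0) := by
  have hs : ∀ w, some w ∈ I.map (someEmb V) ↔ w ∈ I := fun w => by simp [someEmb]
  have hn : (none : Option V) ∉ I.map (someEmb V) := by simp [someEmb]
  have hmap : ∀ {ι : Type _} (M : Matrix ι ι ℤ), M.map (Int.cast : ℤ → ℤ) = M := fun M => by
    ext; simp
  funext u
  have e1 := blowupE_mulVec_none G hne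
    (fun u => if u ∈ I.map (someEmb V) then (1 : ℤ) else 0)
  have e2 := blowupE_mulVec_some G hsym hne hedge
    (fun u => if u ∈ I.map (someEmb V) then (1 : ℤ) else 0) u
  rw [hmap] at e1
  rw [hmap, hmap] at e2
  simp only [blowdown, chTrans, e1, e2, hs, hn]
  split_ifs <;> ring

/-- Blowing down does not decrease the height when `K' none` is nonzero; characteristic vectors
satisfy this because their value on the new vertex is odd. -/
lemma hU_blowupE_le [Fintype V] [DecidableEq V]
    (G : Matrix V V ℤ) (hsym : G.IsSymm) (hneg : MatNegDef G)
    {v₁ v₂ : V} (hne : v₁ ≠ v₂) (hedge : G v₁ v₂ = 1) (K' : Option V → ℤ)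
    (hj : K' none ≠ 0) :
    hU (blowupE G v₁ v₂) K' ≤ hU G (blowdown v₁ v₂ K') := by
  rw [hU_blowupE G hsym hneg hne hedge]
  have h1 : (1 : ℤ) ≤ K' none ^ 2 := Int.add_one_le_iff.2 (sq_pos_of_ne_zero hj)
  have h2 : (1 : ℚ) ≤ (K' none : ℚ) ^ 2 := by exact_mod_cast h1
  linarith

/-- Proposition `PisFilteredEdge`: for every characteristic vector
`(K,p₁,p₂,j)` of the blow-up `G'` and every `E ⊆ V`,
`h_U([(K,p₁+j,p₂+j),E]) ≥ h'_U([(K,p₁,p₂,j),E])`; i.e. the blow-down projection `P` induces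
a filtered map on the lattice complexes. -/
theorem blowdown_hU_filtered [Fintype V] [DecidableEq V]
    (G : Matrix V V ℤ) (hsym : G.IsSymm) (hneg : MatNegDef G)
    (v₁ v₂ : V) (hne : v₁ ≠ v₂) (hedge : G v₁ v₂ = 1)
    (K' : Option V → ℤ) (hK' : IsCharacteristic (blowupE G v₁ v₂) K')
    (E : Finset V) :
    hUcube (blowupE G v₁ v₂) K' (E.map (someEmb V)) ≤ hUcube G (blowdown v₁ v₂ K') E := by
  refine Finset.le_inf' _ _ fun I hI => ?_
  have hI' : I.map (someEmb V) ∈ (E.map (someEmb V)).powerset :=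
    Finset.mem_powerset.2 (Finset.map_subset_map.2 (Finset.mem_powerset.1 hI))
  refine (Finset.inf'_le _ hI').trans ?_
  rw [← blowdown_chTrans G hsym hne hedge]
  refine hU_blowupE_le G hsym hneg hne hedge _ ?_
  -- The value on the new vertex is odd, since `G'(e,e) = -1` and translation preserves parity.
  have hodd : (2 : ℤ) ∣ K' none - (-1) := hK' none
  simp only [chTrans]
  omega
end

section
/- Let G be a negative definite symmetric integer matrix on a finite set V, let v ∈ V, let m̃ be a choice of maxima in the direction v, and let H₀ be the associated step in a contraction homotopy with C₀ = id + H₀∘∂ + ∂∘H₀ on the lattice chain complex. Then for every generator (K,E) the sequence of iterates C₀ⁿ(K,E) eventually stabilizes: there exists N such that C₀ⁿ(K,E) = C₀^N(K,E) for all n ≥ N. -/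
/-!
Write `L` for `C₀`, viewed as a `ℤ[U]`-linear map, and call a chain nilpotent if some power of `L`
kills it; nilpotent chains form a submodule (`killed`). The iterates of `L` on `x` stabilize
exactly when `L x - x` is nilpotent, so the stabilizing chains also form a submodule (`stab`), and
`x` stabilizes as soon as `L x` does.

Along a line `i ↦ K + i v`, each vertex of the cube has a height that is a quadratic function of
`i` with leading coefficient `G v v < 0`. The height of the cube, a minimum of such functions, is
therefore monotone up to its maximizer and antitone after it (`hUcube_le_succ`,
`hUcube_succ_le`). Hence the exponent `a_v[K, E ∪ v]` vanishes when the maximizer `m̃[K, E]` is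
positive, and `b_v[K, E ∪ v]` vanishes otherwise. Two consequences follow.

* If `v ∈ E`, only the `v`-faces contribute to `H₀ ∂ (K, E)`, and the vanishing exponent makes
  `L (K, E)` either zero or a multiple of a translate of `(K, E)` lying closer to its maximizer.
  So `(K, E)` is nilpotent (`single_insert_mem`). In particular the image of `H₀` is nilpotent.
* If `v ∉ E`, then modulo nilpotent chains `L (K, E)` is `(K, E)` itself when `m̃[K, E] = 0`, and
  otherwise a multiple of a translate of `(K, E)` lying closer to its maximizer. So `(K, E)`
  stabilizes (`single_mem_stab`).
-/

open Matrix Finset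

variable {V : Type*}

/-- The translate of a characteristic vector is again characteristic. -/
def chTransC [Fintype V] (G : Matrix V V ℤ) (K : {K : V → ℤ // IsCharacteristic G K})
    (x : V → ℤ) : {K : V → ℤ // IsCharacteristic G K} :=
  ⟨chTrans G K.1 x, fun u => by
    have h := K.2 u
    have e : chTrans G K.1 x u - G u u = (K.1 u - G u u) + 2 * G.mulVec x u := by
      show K.1 u + 2 * G.mulVec x u - G u u = _
      ring
    rw [e]
    exact dvd_add h (dvd_mul_right 2 _)⟩

/-- The sign `ε_{E,v} = (−1)^j`, where `v` is the `j`-th smallest element of `E`. -/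
def signEV [LinearOrder V] (E : Finset V) (v : V) : ℤ :=
  (-1) ^ ((E.filter (fun w => w ≤ v)).card)

/-- The `U`-exponent `(h_U([K',E']) − h_U([K,E]))/2` (a nonnegative integer for the pairs
appearing in the differential). -/
noncomputable def expCoef [Fintype V] [DecidableEq V] (G : Matrix V V ℤ)
    (K K' : V → ℤ) (E E' : Finset V) : ℕ :=
  (⌊(hUcube G K' E' - hUcube G K E) / 2⌋).toNat

/-- The lattice chain complex: the free `ℤ[U]`-module generated by the pairs `(K,E)` with
`K` characteristic and `E ⊆ V`. -/
abbrev LatticeC (V : Type*) [Fintype V] (G : Matrix V V ℤ) :=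
  ({K : V → ℤ // IsCharacteristic G K} × Finset V) →₀ Polynomial ℤ

/-- The differential on a generator:
`∂(K,E) = Σ_{v∈E} ε_{E,v}·(U^{a_v[K,E]}·(K,E∖{v}) − U^{b_v[K,E]}·(K+v,E∖{v}))`. -/
noncomputable def dGen [Fintype V] [DecidableEq V] [LinearOrder V] (G : Matrix V V ℤ)
    (g : {K : V → ℤ // IsCharacteristic G K} × Finset V) : LatticeC V G :=
  ∑ v ∈ g.2, signEV g.2 v •
    (Finsupp.single (g.1, g.2.erase v)
        (Polynomial.X ^ expCoef G g.1.1 g.1.1 g.2 (g.2.erase v)) -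
      Finsupp.single (chTransC G g.1 (dirVec v 1), g.2.erase v)
        (Polynomial.X ^ expCoef G g.1.1 (chTrans G g.1.1 (dirVec v 1)) g.2 (g.2.erase v)))

/-- The `ℤ[U]`-linear differential on the lattice chain complex. -/
noncomputable def dMap [Fintype V] [DecidableEq V] [LinearOrder V] (G : Matrix V V ℤ) :
    LatticeC V G → LatticeC V G :=
  fun c => c.sum fun g p => p • dGen G g

/-- The step in a contraction homotopy on a generator, for the choice of maxima `mt`. -/
noncomputable def H0Gen [Fintype V] [DecidableEq V] [LinearOrder V] (G : Matrix V V ℤ)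
    (v : V) (mt : {K : V → ℤ // IsCharacteristic G K} → Finset V → ℤ)
    (g : {K : V → ℤ // IsCharacteristic G K} × Finset V) : LatticeC V G :=
  if v ∈ g.2 ∨ mt g.1 g.2 = 0 then 0
  else if 0 < mt g.1 g.2 then
    (-signEV (insert v g.2) v) • Finsupp.single (g.1, insert v g.2) 1
  else
    signEV (insert v g.2) v • Finsupp.single (chTransC G g.1 (dirVec v (-1)), insert v g.2) 1

/-- The `ℤ[U]`-linear step in a contraction homotopy `H₀`. -/
noncomputable def H0Map [Fintype V] [DecidableEq V] [LinearOrder V] (G : Matrix V V ℤ)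
    (v : V) (mt : {K : V → ℤ // IsCharacteristic G K} → Finset V → ℤ) :
    LatticeC V G → LatticeC V G :=
  fun c => c.sum fun g p => p • H0Gen G v mt g

/-- The step in a contraction `C₀ = id + H₀∘∂ + ∂∘H₀`. -/
noncomputable def C0 [Fintype V] [DecidableEq V] [LinearOrder V] (G : Matrix V V ℤ)
    (v : V) (mt : {K : V → ℤ // IsCharacteristic G K} → Finset V → ℤ) :
    LatticeC V G → LatticeC V G :=
  fun c => c + H0Map G v mt (dMap G c) + dMap G (H0Map G v mt c)

/-! ### Concavity of heights along a line -/

section Heights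

variable [Fintype V]

lemma chTrans_chTrans (G : Matrix V V ℤ) (K x y : V → ℤ) :
    chTrans G (chTrans G K x) y = chTrans G K (x + y) := by
  funext u
  simp only [chTrans, Matrix.mulVec_add, Pi.add_apply]
  ring

lemma chTrans_zero (G : Matrix V V ℤ) (K : V → ℤ) : chTrans G K 0 = K := by
  funext u
  simp [chTrans]

variable [DecidableEq V]

omit [Fintype V] in
lemma dirVec_add (v : V) (i j : ℤ) : dirVec v i + dirVec v j = dirVec v (i + j) := by
  funext u
  by_cases h : u = v <;> simp [dirVec, h]

omit [Fintype V] in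
lemma dirVec_zero (v : V) : dirVec v 0 = 0 := by
  funext u
  simp [dirVec]

lemma chTransC_cancel (G : Matrix V V ℤ) (K : {K : V → ℤ // IsCharacteristic G K}) (v : V)
    {i j : ℤ} (h : i + j = 0) :
    chTransC G (chTransC G K (dirVec v i)) (dirVec v j) = K := by
  apply Subtype.ext
  change chTrans G (chTrans G K.1 _) _ = K.1
  rw [chTrans_chTrans, dirVec_add, h, dirVec_zero, chTrans_zero]

lemma isUnit_det_of_negDef {G : Matrix V V ℤ} (hneg : MatNegDef G) :
    IsUnit (G.map (Int.cast : ℤ → ℚ)).det := by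
  rw [isUnit_iff_ne_zero]
  intro h
  obtain ⟨x, hx, hx0⟩ := Matrix.exists_mulVec_eq_zero_iff.mpr h
  have := hneg x hx
  rw [hx0] at this
  simp at this

lemma hU_chTrans {G : Matrix V V ℤ} (hsym : G.IsSymm) (hneg : MatNegDef G) (K x : V → ℤ) :
    hU G (chTrans G K x) = hU G K + ((K ⬝ᵥ x + x ⬝ᵥ G.mulVec x : ℤ) : ℚ) := by
  have hu := isUnit_det_of_negDef hneg
  set A := G.map (Int.cast : ℤ → ℚ) with hA
  have hAs : Aᵀ = A := by
    rw [hA, ← Matrix.transpose_map, hsym.eq]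
  set k : V → ℚ := fun u => (K u : ℚ) with hk
  set y : V → ℚ := fun u => (x u : ℚ) with hy
  have hG : (fun u => ((G.mulVec x u : ℤ) : ℚ)) = A.mulVec y := by
    funext u
    simp [Matrix.mulVec, dotProduct, hA, hy]
  have h1 : (fun u => ((chTrans G K x u : ℤ) : ℚ)) = k + (2 : ℚ) • A.mulVec y := by
    rw [← hG]
    funext u
    simp [chTrans, hk]
  have h2 : ((K ⬝ᵥ x + x ⬝ᵥ G.mulVec x : ℤ) : ℚ) = k ⬝ᵥ y + y ⬝ᵥ A.mulVec y := by
    rw [← hG]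
    simp [dotProduct, hk, hy]
  have h3 : A⁻¹.mulVec (A.mulVec y) = y := by
    rw [Matrix.mulVec_mulVec, Matrix.nonsing_inv_mul _ hu, Matrix.one_mulVec]
  have h4 : A.mulVec y ⬝ᵥ A⁻¹.mulVec k = k ⬝ᵥ y := by
    rw [Matrix.dotProduct_mulVec, ← Matrix.mulVec_transpose, Matrix.transpose_nonsing_inv, hAs, h3,
      dotProduct_comm]
  have h5 : A.mulVec y ⬝ᵥ y = y ⬝ᵥ A.mulVec y := dotProduct_comm _ _
  rw [h2]
  unfold hU
  rw [h1, ← hA, Matrix.mulVec_add, Matrix.mulVec_smul, h3]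
  simp only [dotProduct_add, add_dotProduct, smul_dotProduct, dotProduct_smul, h4, h5, smul_eq_mul]
  ring

/-- The height along a line in the direction `v` is a concave quadratic function. -/
lemma hU_line {G : Matrix V V ℤ} (hsym : G.IsSymm) (hneg : MatNegDef G) (v : V) (K : V → ℤ) :
    ∃ c d g : ℚ, g ≤ 0 ∧ ∀ i : ℤ, hU G (chTrans G K (dirVec v i)) = c + d * i + g * i ^ 2 := by
  have hd : ∀ i : ℤ, dirVec v i = Pi.single v i := by
    intro i
    funext u
    simp [dirVec, Pi.single_apply]
  refine ⟨hU G K, K v, G v v, ?_, ?_⟩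
  · have h := hneg (Pi.single v 1) (by simp)
    simp at h
    exact_mod_cast h.le
  · intro i
    rw [hU_chTrans hsym hneg, hd]
    simp
    ring

/-- The vertex `K + Σ_{u ∈ I} e_u` of a cube. -/
def cubeVertex (G : Matrix V V ℤ) (K : V → ℤ) (I : Finset V) : V → ℤ :=
  chTrans G K (fun u => if u ∈ I then (1 : ℤ) else 0)

lemma hUcube_le (G : Matrix V V ℤ) (K : V → ℤ) {I E : Finset V} (h : I ⊆ E) :
    hUcube G K E ≤ hU G (cubeVertex G K I) :=
  Finset.inf'_le _ (Finset.mem_powerset.mpr h)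

lemma exists_hUcube_eq (G : Matrix V V ℤ) (K : V → ℤ) (E : Finset V) :
    ∃ I ⊆ E, hUcube G K E = hU G (cubeVertex G K I) := by
  obtain ⟨I, hI, h⟩ := Finset.exists_mem_eq_inf' (Finset.powerset_nonempty E)
    (fun I => hU G (chTrans G K (fun u => if u ∈ I then (1 : ℤ) else 0)))
  exact ⟨I, Finset.mem_powerset.mp hI, h⟩

lemma cubeVertex_chTrans (G : Matrix V V ℤ) (K x : V → ℤ) (I : Finset V) :
    cubeVertex G (chTrans G K x) I = chTrans G (cubeVertex G K I) x := by
  unfold cubeVertex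
  rw [chTrans_chTrans, chTrans_chTrans, add_comm]

/-- The height of a cube does not drop at a step towards a maximizer `m > 0`. -/
lemma hUcube_le_succ {G : Matrix V V ℤ} (hsym : G.IsSymm) (hneg : MatNegDef G) (v : V)
    (K : V → ℤ) (E : Finset V) (m : ℤ) (hm : 0 < m)
    (hmax : ∀ i : ℤ, hUcube G (chTrans G K (dirVec v i)) E ≤
      hUcube G (chTrans G K (dirVec v m)) E) :
    hUcube G K E ≤ hUcube G (chTrans G K (dirVec v 1)) E := by
  by_contra! hlt
  -- The vertex `I` realizing the height at `1` would be strictly lower there than at both `0` and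
  -- `m`, against concavity along its line.
  obtain ⟨I, hI, h1⟩ := exists_hUcube_eq G (chTrans G K (dirVec v 1)) E
  obtain ⟨c, d, g, hg, hq⟩ := hU_line hsym hneg v (cubeVertex G K I)
  have e0 := hUcube_le G (chTrans G K (dirVec v 0)) hI
  have em := hUcube_le G (chTrans G K (dirVec v m)) hI
  have hm0 := hmax 0
  rw [cubeVertex_chTrans, hq] at h1 e0 em
  rw [dirVec_zero, chTrans_zero] at e0 hm0
  push_cast at h1 e0 em
  have hm' : (1 : ℚ) ≤ m := by exact_mod_cast hm
  nlinarith [mul_nonneg (sub_nonneg.mpr hm') (neg_nonneg.mpr hg),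
    mul_nonneg (mul_nonneg (sub_nonneg.mpr hm') (neg_nonneg.mpr hg)) (by linarith : (0 : ℚ) ≤ m),
    mul_nonneg (sub_nonneg.mpr hm') (by linarith : (0 : ℚ) ≤ -(d + g))]

/-- The height of a cube does not rise at a step away from a maximizer `m ≤ 0`. -/
lemma hUcube_succ_le {G : Matrix V V ℤ} (hsym : G.IsSymm) (hneg : MatNegDef G) (v : V)
    (K : V → ℤ) (E : Finset V) (m : ℤ) (hm : m ≤ 0)
    (hmax : ∀ i : ℤ, hUcube G (chTrans G K (dirVec v i)) E ≤
      hUcube G (chTrans G K (dirVec v m)) E) :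
    hUcube G (chTrans G K (dirVec v 1)) E ≤ hUcube G K E := by
  by_contra! hlt
  -- The vertex `I` realizing the height at `0` would be strictly lower there than at both `m` and
  -- `1`, against concavity along its line.
  obtain ⟨I, hI, h0⟩ := exists_hUcube_eq G (chTrans G K (dirVec v 0)) E
  obtain ⟨c, d, g, hg, hq⟩ := hU_line hsym hneg v (cubeVertex G K I)
  have e1 := hUcube_le G (chTrans G K (dirVec v 1)) hI
  have em := hUcube_le G (chTrans G K (dirVec v m)) hI
  have hm1 := hmax 1
  rw [cubeVertex_chTrans, hq] at h0 e1 em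
  rw [dirVec_zero, chTrans_zero] at h0
  push_cast at h0 e1 em
  have hm' : (m : ℚ) ≤ 0 := by exact_mod_cast hm
  nlinarith [mul_nonneg (neg_nonneg.mpr hm') (by linarith : (0 : ℚ) ≤ d + g),
    mul_nonneg (neg_nonneg.mpr hm') (neg_nonneg.mpr hg),
    mul_nonneg (sq_nonneg (m : ℚ)) (neg_nonneg.mpr hg)]

lemma hUcube_insert (G : Matrix V V ℤ) (K : V → ℤ) {v : V} {E : Finset V} (hv : v ∉ E) :
    hUcube G K (insert v E) = min (hUcube G K E) (hUcube G (chTrans G K (dirVec v 1)) E) := by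
  have key : ∀ I : Finset V, v ∉ I →
      cubeVertex G (chTrans G K (dirVec v 1)) I = cubeVertex G K (insert v I) := by
    intro I hI
    unfold cubeVertex
    rw [chTrans_chTrans]
    congr 1
    funext u
    by_cases h : u = v
    · subst h
      simp [dirVec, hI]
    · simp [dirVec, h]
  apply le_antisymm
  · apply le_min
    · obtain ⟨I, hI, h⟩ := exists_hUcube_eq G K E
      rw [h]
      exact hUcube_le G K (hI.trans (Finset.subset_insert _ _))
    · obtain ⟨I, hI, h⟩ := exists_hUcube_eq G (chTrans G K (dirVec v 1)) E
      rw [h, key I (fun h => hv (hI h))]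
      exact hUcube_le G K (Finset.insert_subset_insert _ hI)
  · obtain ⟨I, hI, h⟩ := exists_hUcube_eq G K (insert v E)
    rw [h]
    by_cases hvI : v ∈ I
    · refine (min_le_right _ _).trans ?_
      have h2 := key (I.erase v) (Finset.notMem_erase _ _)
      rw [Finset.insert_erase hvI] at h2
      rw [← h2]
      exact hUcube_le _ _ (Finset.subset_insert_iff.mp hI)
    · exact (min_le_left _ _).trans
        (hUcube_le G K ((Finset.subset_insert_iff_of_notMem hvI).mp hI))

end Heights

/-! ### Nilpotent and stabilizing vectors of an endomorphism -/

section NilpotentChains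

variable {R M : Type*} [CommRing R] [AddCommGroup M] [Module R M]

/-- The submodule of vectors killed by some power of `L`. -/
def killed (L : Module.End R M) : Submodule R M := L.maxGenEigenspace 0

/-- The submodule of vectors whose iterates under `L` stabilize (see `iterates_of_mem_stab`):
those `x` for which `L x - x` is killed by a power of `L`. -/
def stab (L : Module.End R M) : Submodule R M := (killed L).comap (L - 1)

lemma mem_killed {L : Module.End R M} {x : M} : x ∈ killed L ↔ ∃ k : ℕ, (L ^ k) x = 0 := by
  simp [killed, Module.End.mem_maxGenEigenspace]

lemma mem_stab {L : Module.End R M} {x : M} : x ∈ stab L ↔ L x - x ∈ killed L := Iff.rfl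

lemma apply_mem_killed_iff {L : Module.End R M} {x : M} : L x ∈ killed L ↔ x ∈ killed L := by
  simp only [mem_killed]
  constructor
  · rintro ⟨k, hk⟩
    exact ⟨k + 1, by rw [pow_succ]; exact hk⟩
  · rintro ⟨k, hk⟩
    refine ⟨k, ?_⟩
    change (L ^ k * L) x = 0
    rw [← pow_succ, pow_succ']
    simp [hk]

lemma killed_le_stab (L : Module.End R M) : killed L ≤ stab L := fun _ hx =>
  (killed L).sub_mem (apply_mem_killed_iff.mpr hx) hx

lemma mem_stab_of_apply {L : Module.End R M} {x : M} (h : L x ∈ stab L) : x ∈ stab L := by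
  rw [mem_stab, ← map_sub, apply_mem_killed_iff] at h
  exact h

lemma iterates_of_mem_stab {L : Module.End R M} {x : M} (h : x ∈ stab L) :
    ∃ N : ℕ, ∀ n ≥ N, L^[n] x = L^[N] x := by
  obtain ⟨N, hN⟩ := mem_killed.mp h
  rw [LinearMap.sub_apply, map_sub, sub_eq_zero, Module.End.one_apply] at hN
  refine ⟨N, fun n hn => ?_⟩
  induction n, hn using Nat.le_induction with
  | base => rfl
  | succ n hn ih =>
    rw [Function.iterate_succ_apply', ih, ← Module.End.pow_apply, ← Module.End.mul_apply,
      ← pow_succ', pow_succ, Module.End.mul_apply, hN]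

end NilpotentChains

/-! ### The contraction step on cubes -/

section Step

variable [Fintype V] [DecidableEq V] [LinearOrder V]

/-- `dMap` as a linear map. -/
noncomputable def dLin (G : Matrix V V ℤ) : Module.End (Polynomial ℤ) (LatticeC V G) :=
  Finsupp.linearCombination _ (dGen G)

/-- `H0Map` as a linear map. -/
noncomputable def H0Lin (G : Matrix V V ℤ) (v : V)
    (mt : {K : V → ℤ // IsCharacteristic G K} → Finset V → ℤ) :
    Module.End (Polynomial ℤ) (LatticeC V G) :=
  Finsupp.linearCombination _ (H0Gen G v mt)

/-- `C0` as a linear map. -/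
noncomputable def C0Lin (G : Matrix V V ℤ) (v : V)
    (mt : {K : V → ℤ // IsCharacteristic G K} → Finset V → ℤ) :
    Module.End (Polynomial ℤ) (LatticeC V G) :=
  1 + H0Lin G v mt * dLin G + dLin G * H0Lin G v mt

lemma C0_eq_C0Lin (G : Matrix V V ℤ) (v : V)
    (mt : {K : V → ℤ // IsCharacteristic G K} → Finset V → ℤ) :
    C0 G v mt = C0Lin G v mt := rfl

omit [Fintype V] [DecidableEq V] in
lemma signEV_smul_smul {M : Type*} [AddCommGroup M] (E : Finset V) (v : V) (x : M) :
    signEV E v • signEV E v • x = x := by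
  rw [smul_smul, signEV, ← mul_pow]
  simp

/-- The part of `∂ (K, E)` coming from the pair of faces in the direction `w`, without its sign
`ε_{E,w}`. -/
noncomputable def facePair (G : Matrix V V ℤ) (K : {K : V → ℤ // IsCharacteristic G K})
    (E : Finset V) (w : V) : LatticeC V G :=
  Finsupp.single (K, E.erase w) (Polynomial.X ^ expCoef G K.1 K.1 E (E.erase w)) -
    Finsupp.single (chTransC G K (dirVec w 1), E.erase w)
      (Polynomial.X ^ expCoef G K.1 (chTrans G K.1 (dirVec w 1)) E (E.erase w))

lemma dGen_insert (G : Matrix V V ℤ) (K : {K : V → ℤ // IsCharacteristic G K}) {v : V}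
    {E : Finset V} (hv : v ∉ E) :
    dGen G (K, insert v E) = signEV (insert v E) v • facePair G K (insert v E) v +
      ∑ w ∈ E, signEV (insert v E) w • facePair G K (insert v E) w :=
  Finset.sum_insert hv

variable {G : Matrix V V ℤ} {v : V} {mt : {K : V → ℤ // IsCharacteristic G K} → Finset V → ℤ}

lemma H0Lin_single (g : {K : V → ℤ // IsCharacteristic G K} × Finset V) (p : Polynomial ℤ) :
    H0Lin G v mt (Finsupp.single g p) = p • H0Gen G v mt g :=
  Finsupp.linearCombination_single _ _ _

lemma dLin_single (g : {K : V → ℤ // IsCharacteristic G K} × Finset V) (p : Polynomial ℤ) :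
    dLin G (Finsupp.single g p) = p • dGen G g :=
  Finsupp.linearCombination_single _ _ _

lemma C0Lin_single (g : {K : V → ℤ // IsCharacteristic G K} × Finset V) :
    C0Lin G v mt (Finsupp.single g 1) =
      Finsupp.single g 1 + H0Lin G v mt (dGen G g) + dLin G (H0Gen G v mt g) := by
  simp [C0Lin, H0Lin_single, dLin_single]

omit [DecidableEq V] [LinearOrder V] in
lemma single_eq_smul (g : {K : V → ℤ // IsCharacteristic G K} × Finset V) (p : Polynomial ℤ) :
    (Finsupp.single g p : LatticeC V G) = p • Finsupp.single g 1 := by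
  simp

lemma H0Lin_dGen_insert (K : {K : V → ℤ // IsCharacteristic G K}) {E : Finset V} (hv : v ∉ E) :
    H0Lin G v mt (dGen G (K, insert v E)) =
      signEV (insert v E) v • H0Lin G v mt (facePair G K (insert v E) v) := by
  rw [dGen_insert G K hv, map_add, map_zsmul, map_sum, Finset.sum_eq_zero, add_zero]
  intro w hw
  have hvw : v ≠ w := fun h => hv (h ▸ hw)
  simp [facePair, H0Lin_single, H0Gen, hvw]

omit [LinearOrder V] in
lemma facePair_insert (K : {K : V → ℤ // IsCharacteristic G K}) {E : Finset V} (hv : v ∉ E) :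
    facePair G K (insert v E) v =
      Finsupp.single (K, E) (Polynomial.X ^ expCoef G K.1 K.1 (insert v E) E) -
      Finsupp.single (chTransC G K (dirVec v 1), E)
        (Polynomial.X ^ expCoef G K.1 (chTrans G K.1 (dirVec v 1)) (insert v E) E) := by
  rw [facePair, Finset.erase_insert hv]

lemma H0Gen_of_pos (K : {K : V → ℤ // IsCharacteristic G K}) {E : Finset V} (hv : v ∉ E)
    (h : 0 < mt K E) :
    H0Gen G v mt (K, E) = -(signEV (insert v E) v • Finsupp.single (K, insert v E) 1) := by
  simp [H0Gen, hv, h, h.ne']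

lemma H0Gen_of_neg (K : {K : V → ℤ // IsCharacteristic G K}) {E : Finset V} (hv : v ∉ E)
    (h : mt K E < 0) :
    H0Gen G v mt (K, E) = signEV (insert v E) v •
      Finsupp.single (chTransC G K (dirVec v (-1)), insert v E) 1 := by
  simp [H0Gen, hv, h.not_gt, h.ne]

lemma H0Gen_of_zero (K : {K : V → ℤ // IsCharacteristic G K}) {E : Finset V}
    (h : mt K E = 0) : H0Gen G v mt (K, E) = 0 := by
  simp [H0Gen, h]

lemma H0Gen_of_mem (K : {K : V → ℤ // IsCharacteristic G K}) {E : Finset V}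
    (h : v ∈ E) : H0Gen G v mt (K, E) = 0 := by
  simp [H0Gen, h]

variable (hsym : G.IsSymm) (hneg : MatNegDef G)
  (hmt_orbit : ∀ K E, v ∉ E → ∀ i : ℤ, mt (chTransC G K (dirVec v i)) E = mt K E - i)
  (hmt_max : ∀ K E, v ∉ E → ∀ i : ℤ,
    hUcube G (chTrans G K.1 (dirVec v i)) E ≤
      hUcube G (chTrans G K.1 (dirVec v (mt K E))) E)

omit [LinearOrder V] in
include hsym hneg hmt_max in
/-- The exponent `a_v` vanishes when the maximizer is positive. -/
lemma facePair_of_pos (K : {K : V → ℤ // IsCharacteristic G K}) {E : Finset V} (hv : v ∉ E)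
    (h : 0 < mt K E) :
    ∃ b : ℕ, facePair G K (insert v E) v = Finsupp.single (K, E) 1 -
      Finsupp.single (chTransC G K (dirVec v 1), E) (Polynomial.X ^ b) := by
  have h1 := hUcube_le_succ hsym hneg v K.1 E _ h (hmt_max K E hv)
  refine ⟨expCoef G K.1 (chTrans G K.1 (dirVec v 1)) (insert v E) E, ?_⟩
  rw [facePair_insert K hv, show expCoef G K.1 K.1 (insert v E) E = 0 by
    simp [expCoef, hUcube_insert G K.1 hv, min_eq_left h1], pow_zero]

omit [LinearOrder V] in
include hsym hneg hmt_max in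
/-- The exponent `b_v` vanishes when the maximizer is not positive. -/
lemma facePair_of_nonpos (K : {K : V → ℤ // IsCharacteristic G K}) {E : Finset V} (hv : v ∉ E)
    (h : mt K E ≤ 0) :
    ∃ a : ℕ, facePair G K (insert v E) v = Finsupp.single (K, E) (Polynomial.X ^ a) -
      Finsupp.single (chTransC G K (dirVec v 1), E) 1 := by
  have h1 := hUcube_succ_le hsym hneg v K.1 E _ h (hmt_max K E hv)
  refine ⟨expCoef G K.1 K.1 (insert v E) E, ?_⟩
  rw [facePair_insert K hv, show expCoef G K.1 (chTrans G K.1 (dirVec v 1)) (insert v E) E = 0 by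
    simp [expCoef, hUcube_insert G K.1 hv, min_eq_right h1], pow_zero]

include hsym hneg hmt_orbit hmt_max in
/-- Cubes having `v` as a direction are killed by a power of `C₀`, by induction on the distance
to the maximizer. -/
lemma single_insert_mem {E : Finset V} (hv : v ∉ E) (n : ℕ) :
    ∀ K : {K : V → ℤ // IsCharacteristic G K}, (mt K E).natAbs ≤ n →
      (Finsupp.single (K, insert v E) 1 : LatticeC V G) ∈ killed (C0Lin G v mt) := by
  induction n with
  | zero =>
    intro K hK
    have h0 : mt K E = 0 := by omega
    have h1 := hmt_orbit K E hv 1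
    obtain ⟨a, ha⟩ := facePair_of_nonpos hsym hneg hmt_max K hv h0.le
    rw [← apply_mem_killed_iff, C0Lin_single, H0Lin_dGen_insert K hv, ha, map_sub, H0Lin_single,
      H0Lin_single, H0Gen_of_zero K h0, H0Gen_of_neg _ hv (by omega),
      H0Gen_of_mem K (Finset.mem_insert_self _ _), smul_zero, zero_sub, one_smul, smul_neg,
      signEV_smul_smul, chTransC_cancel G K v (by norm_num)]
    simp
  | succ n ih =>
    intro K hK
    have hp := hmt_orbit K E hv 1
    have hm := hmt_orbit K E hv (-1)
    rw [← apply_mem_killed_iff, C0Lin_single, H0Lin_dGen_insert K hv,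
      H0Gen_of_mem K (Finset.mem_insert_self _ _), map_zero, add_zero]
    rcases lt_trichotomy (mt K E) 0 with h | h | h
    · obtain ⟨a, ha⟩ := facePair_of_nonpos hsym hneg hmt_max K hv h.le
      rw [ha, map_sub, H0Lin_single, H0Lin_single, H0Gen_of_neg K hv h,
        H0Gen_of_neg _ hv (by omega), one_smul, smul_sub, smul_comm, signEV_smul_smul,
        signEV_smul_smul, chTransC_cancel G K v (by norm_num), add_sub_cancel]
      exact (killed _).smul_mem _ (ih _ (by omega))
    · rw [← H0Lin_dGen_insert K hv]
      have := ih K (by omega)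
      rwa [← apply_mem_killed_iff, C0Lin_single, H0Gen_of_mem K (Finset.mem_insert_self _ _),
        map_zero, add_zero] at this
    · obtain ⟨b, hb⟩ := facePair_of_pos hsym hneg hmt_max K hv h
      rw [hb, map_sub, H0Lin_single, H0Lin_single, H0Gen_of_pos K hv h, one_smul, smul_sub,
        smul_neg, signEV_smul_smul, sub_eq_add_neg, add_neg_cancel_left, smul_comm]
      rcases (show 1 < mt K E ∨ mt K E = 1 by omega) with h1 | h1
      · rw [H0Gen_of_pos _ hv (by omega), smul_neg, signEV_smul_smul, smul_neg, neg_neg]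
        exact (killed _).smul_mem _ (ih _ (by omega))
      · rw [H0Gen_of_zero _ (by omega)]
        simp

include hsym hneg hmt_orbit hmt_max in
lemma single_mem_killed {K : {K : V → ℤ // IsCharacteristic G K}} {E : Finset V} (hv : v ∈ E)
    (p : Polynomial ℤ) :
    (Finsupp.single (K, E) p : LatticeC V G) ∈ killed (C0Lin G v mt) := by
  have h := single_insert_mem hsym hneg hmt_orbit hmt_max (Finset.notMem_erase v E) _ K le_rfl
  rw [Finset.insert_erase hv] at h
  rw [single_eq_smul]
  exact (killed _).smul_mem p h

include hsym hneg hmt_orbit hmt_max in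
lemma H0Lin_mem_killed (x : LatticeC V G) : H0Lin G v mt x ∈ killed (C0Lin G v mt) := by
  induction x using Finsupp.induction_linear with
  | zero => simp
  | add x y hx hy => rw [map_add]; exact add_mem hx hy
  | single g p =>
    rw [H0Lin_single]
    apply (killed _).smul_mem
    unfold H0Gen
    split_ifs
    · exact zero_mem _
    · exact zsmul_mem (single_mem_killed hsym hneg hmt_orbit hmt_max
        (Finset.mem_insert_self _ _) 1) _
    · exact zsmul_mem (single_mem_killed hsym hneg hmt_orbit hmt_max
        (Finset.mem_insert_self _ _) 1) _

include hsym hneg hmt_orbit hmt_max in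
/-- Modulo chains killed by a power of `C₀`, only the `v`-faces matter in the differential of a
cube having `v` as a direction. -/
lemma dGen_insert_sub_mem (K : {K : V → ℤ // IsCharacteristic G K}) {E : Finset V}
    (hv : v ∉ E) :
    dGen G (K, insert v E) - signEV (insert v E) v • facePair G K (insert v E) v ∈
      killed (C0Lin G v mt) := by
  rw [dGen_insert G K hv, add_sub_cancel_left]
  refine sum_mem fun w hw => zsmul_mem ?_ _
  have hvw : v ∈ (insert v E).erase w :=
    Finset.mem_erase.mpr ⟨fun h => hv (h ▸ hw), Finset.mem_insert_self _ _⟩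
  exact sub_mem (single_mem_killed hsym hneg hmt_orbit hmt_max hvw _)
    (single_mem_killed hsym hneg hmt_orbit hmt_max hvw _)

include hsym hneg hmt_orbit hmt_max in
/-- Cubes not having `v` as a direction stabilize, by induction on the distance to the
maximizer. -/
lemma single_mem_stab {E : Finset V} (hv : v ∉ E) (n : ℕ) :
    ∀ K : {K : V → ℤ // IsCharacteristic G K}, (mt K E).natAbs ≤ n →
      (Finsupp.single (K, E) 1 : LatticeC V G) ∈ stab (C0Lin G v mt) := by
  have hH := H0Lin_mem_killed hsym hneg hmt_orbit hmt_max
  have hd := dGen_insert_sub_mem hsym hneg hmt_orbit hmt_max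
  have hle := killed_le_stab (C0Lin G v mt)
  have hzero : ∀ K : {K : V → ℤ // IsCharacteristic G K}, mt K E = 0 →
      (Finsupp.single (K, E) 1 : LatticeC V G) ∈ stab (C0Lin G v mt) := by
    intro K h0
    rw [mem_stab, C0Lin_single, H0Gen_of_zero K h0, map_zero, add_zero, add_sub_cancel_left]
    exact hH _
  induction n with
  | zero => exact fun K hK => hzero K (by omega)
  | succ n ih =>
    intro K hK
    have hp := hmt_orbit K E hv 1
    have hm := hmt_orbit K E hv (-1)
    rcases lt_trichotomy (mt K E) 0 with h | h | h
    · set K' := chTransC G K (dirVec v (-1)) with hK'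
      obtain ⟨a, ha⟩ := facePair_of_nonpos hsym hneg hmt_max K' hv (by omega)
      have hx := hd K' hv
      rw [ha, hK', chTransC_cancel G K v (by norm_num), ← hK'] at hx
      have hy := (stab (C0Lin G v mt)).smul_mem (Polynomial.X ^ a) (ih K' (by omega))
      rw [← single_eq_smul] at hy
      have hz := add_mem (add_mem hy (hle (hH (dGen G (K, E)))))
        (hle (zsmul_mem hx (signEV (insert v E) v)))
      apply mem_stab_of_apply
      rw [C0Lin_single, H0Gen_of_neg K hv h, map_zsmul, dLin_single, one_smul]
      convert hz using 1
      rw [smul_sub, signEV_smul_smul]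
      abel
    · exact hzero K h
    · obtain ⟨b, hb⟩ := facePair_of_pos hsym hneg hmt_max K hv h
      have hx := hd K hv
      rw [hb] at hx
      have hy := (stab (C0Lin G v mt)).smul_mem (Polynomial.X ^ b)
        (ih (chTransC G K (dirVec v 1)) (by omega))
      rw [← single_eq_smul] at hy
      have hz := sub_mem (add_mem hy (hle (hH (dGen G (K, E)))))
        (hle (zsmul_mem hx (signEV (insert v E) v)))
      apply mem_stab_of_apply
      rw [C0Lin_single, H0Gen_of_pos K hv h, map_neg, map_zsmul, dLin_single, one_smul]
      convert hz using 1
      rw [smul_sub, signEV_smul_smul]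
      abel

end Step

/-- Lemma `CnaughtStabilizes`: for every generator `(K,E)` the iterates
`C₀ⁿ(K,E)` eventually stabilize. -/
theorem C0_iterates_stabilize [Fintype V] [DecidableEq V] [LinearOrder V]
    (G : Matrix V V ℤ) (hsym : G.IsSymm) (hneg : MatNegDef G) (v : V)
    (mt : {K : V → ℤ // IsCharacteristic G K} → Finset V → ℤ)
    (hmt_orbit : ∀ K E, v ∉ E → ∀ i : ℤ, mt (chTransC G K (dirVec v i)) E = mt K E - i)
    (hmt_max : ∀ K E, v ∉ E → ∀ i : ℤ,
      hUcube G (chTrans G K.1 (dirVec v i)) E ≤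
        hUcube G (chTrans G K.1 (dirVec v (mt K E))) E)
    (hmt_ext : ∀ K E, v ∈ E → mt K E = mt K (E.erase v))
    (K : {K : V → ℤ // IsCharacteristic G K}) (E : Finset V) :
    ∃ N : ℕ, ∀ n ≥ N,
      (C0 G v mt)^[n] (Finsupp.single (K, E) 1) =
        (C0 G v mt)^[N] (Finsupp.single (K, E) 1) := by
  rw [C0_eq_C0Lin]
  apply iterates_of_mem_stab
  by_cases hv : v ∈ E
  · exact killed_le_stab _ (single_mem_killed hsym hneg hmt_orbit hmt_max hv 1)
  · exact single_mem_stab hsym hneg hmt_orbit hmt_max hv _ K le_rfl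
end

section
/- Let G be a negative definite symmetric integer matrix on a finite set V whose off-diagonal entries lie in {0,1} and whose associated graph is a forest, with G(v₁,v₂) = 1, and let G' on V' = V ∪ {e} be the blow-up of G along the edge v₁v₂. Fix a characteristic vector (K,p₁,p₂) of G and E ⊆ V, and set Δ_min = min( Δ_{v₁}^{v₂}[(K,p₁,p₂),E], Δ_{v₂}^{v₁}[(K,p₁,p₂),E] ) and Δ_max = max( Δ_{v₁}^{v₂}[(K,p₁,p₂),E], Δ_{v₂}^{v₁}[(K,p₁,p₂),E] ), with values in ℤ ∪ {+∞} (the value is +∞ when the corresponding vertex is not in E). For i ∈ ℤ let K̃_i = (K, p₁+1+2i, p₂+1+2i, −1−2i) be the characteristic vector (K,p₁+1,p₂+1,−1) + i·e of G'. Then, computing in G': Δ_e[K̃_i, E∪{e}] = 1 − i if i < −Δ_max; Δ_e[K̃_i, E∪{e}] = −i if −Δ_max ≤ i < −Δ_min; and Δ_e[K̃_i, E∪{e}] = −1 − i if −Δ_min ≤ i (with the convention −(+∞) = −∞). -/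
/-!
For `I ⊆ E` write `f(I)` for `f([K,I])` computed in `G`, `f'` for the same quantity for `K̃_i` in
the blow-up `G'`, and `a = [v₁ ∈ I]`, `b = [v₂ ∈ I]`. Since
`G'(x,y) = G(x,y) - ([x=v₁]+[x=v₂])([y=v₁]+[y=v₂])` on old vertices, a direct computation in the
blow-up gives `f'(I) = f(I) + i(a+b) - ab` and `f'(I ∪ {e}) = f(I) + (i+1)(a+b) - ab - 1 - i`
(`fKI_blowup`, `fKI_blowup_insert`).

Cutting the edge `v₁v₂` of the forest splits `E` into the `v₁`-side `E_{v₁}^{v₂}`, the `v₂`-side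
`E_{v₂}^{v₁}`, and the other trees; the only interaction in `f` between these pieces is the term
`ab` coming from the edge, and `-ab` cancels it. Hence both minima decouple (`exists_split`):
with `m_k(c)` the minimum of `f(I) + c[v_k ∈ I]` over subsets of the `v_k`-side,
`Δ_e = -1 - i + (m₁(i+1) - m₁(i)) + (m₂(i+1) - m₂(i))` (`DeltaE_eq`).

Finally `m_k(c) = min(A, B + c)` if `v_k ∈ E`, and `m_k` is constant otherwise. Because `K` is
characteristic, `A` and `B` are integers, so `m_k(i+1) - m_k(i)` is `1` if `B - A < -i` and `0` if
`-i ≤ B - A` (`wmin_succ_of_lt`, `wmin_succ_of_le`). The three cases of the theorem count how many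
of the two increments are `1`.
-/

open Matrix Finset

variable {V : Type*}

/-- `f([K,I]) = ((Σ_{v∈I} K v) + x_Iᵀ G x_I)/2`. -/
noncomputable def fKI [Fintype V] [DecidableEq V] (G : Matrix V V ℤ) (K : V → ℤ)
    (I : Finset V) : ℚ :=
  (((∑ u ∈ I, K u) +
      (fun u => if u ∈ I then (1 : ℤ) else 0) ⬝ᵥ
        G.mulVec (fun u => if u ∈ I then (1 : ℤ) else 0) : ℤ) : ℚ) / 2

/-- `A_v[K,E] = min_{I ⊆ E∖{v}} f([K,I])`. -/
noncomputable def Av [Fintype V] [DecidableEq V] (G : Matrix V V ℤ) (K : V → ℤ)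
    (w : V) (E : Finset V) : ℚ :=
  ((E.erase w).powerset).inf' (Finset.powerset_nonempty _) (fun I => fKI G K I)

/-- `B_v[K,E] = min_{v ∈ I ⊆ E} f([K,I])`. -/
noncomputable def Bv [Fintype V] [DecidableEq V] (G : Matrix V V ℤ) (K : V → ℤ)
    (w : V) (E : Finset V) : ℚ :=
  ((E.erase w).powerset).inf' (Finset.powerset_nonempty _) (fun I => fKI G K (insert w I))

/-- The graph of `G`: an edge between `u ≠ w` exactly when `G u w = 1`. -/
def graphOf (G : Matrix V V ℤ) : SimpleGraph V :=
  SimpleGraph.fromRel (fun u w => G u w = 1)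

/-- The (unique, in a forest) path from `x` to `v` passes through `u`. -/
def onPath (Γ : SimpleGraph V) (x v u : V) : Prop :=
  ∃ p : Γ.Walk x v, p.IsPath ∧ u ∈ p.support

/-- `E_u^v`: the elements of `E` whose path to `v` passes through `u`. -/
noncomputable def Esub (Γ : SimpleGraph V) (E : Finset V) (u v : V) : Finset V :=
  @Finset.filter _ (fun x => onPath Γ x v u) (Classical.decPred _) E

/-- `Δ_w[K,E] = B_w[K,E] − A_w[K,E]`, with value `+∞` when `w ∉ E`. -/
noncomputable def DeltaTop [Fintype V] [DecidableEq V] (G : Matrix V V ℤ) (K : V → ℤ)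
    (w : V) (E : Finset V) : WithTop ℚ :=
  if w ∈ E then ((Bv G K w E - Av G K w E : ℚ) : WithTop ℚ) else ⊤

/-- `K̃_i = (K, p₁+1+2i, p₂+1+2i, −1−2i)`, the lift `(K,p₁+1,p₂+1,−1) + i·e` of `K`. -/
def Ktilde [DecidableEq V] (v₁ v₂ : V) (K : V → ℤ) (i : ℤ) : Option V → ℤ :=
  fun o => match o with
  | none => -1 - 2 * i
  | some u => if u = v₁ ∨ u = v₂ then K u + 1 + 2 * i else K u

/-- `Δ_e[K̃_i, E∪{e}]`, computed in the blow-up `G'` (well defined since `e ∈ E∪{e}`). -/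
noncomputable def DeltaE [Fintype V] [DecidableEq V] (G : Matrix V V ℤ) (v₁ v₂ : V)
    (K : V → ℤ) (E : Finset V) (i : ℤ) : ℚ :=
  Bv (blowupE G v₁ v₂) (Ktilde v₁ v₂ K i) none (insert none (E.map (someEmb V))) -
    Av (blowupE G v₁ v₂) (Ktilde v₁ v₂ K i) none (insert none (E.map (someEmb V)))

/-! ### Values of `f` in the graph and in its blow-up -/

/-- `[u ∈ I]` as an integer. -/
def indic [DecidableEq V] (u : V) (I : Finset V) : ℤ := if u ∈ I then 1 else 0

lemma fKI_eq [Fintype V] [DecidableEq V] (G : Matrix V V ℤ) (K : V → ℤ) (I : Finset V) :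
    fKI G K I = ((∑ u ∈ I, K u + ∑ u ∈ I, ∑ w ∈ I, G u w : ℤ) : ℚ) / 2 := by
  unfold fKI
  congr 2
  simp [dotProduct, mulVec, Finset.sum_ite_mem]

lemma fKI_union [Fintype V] [DecidableEq V] (G : Matrix V V ℤ) (hsym : G.IsSymm) (K : V → ℤ)
    {I J : Finset V} (h : Disjoint I J) :
    fKI G K (I ∪ J) = fKI G K I + fKI G K J + ((∑ u ∈ I, ∑ w ∈ J, G u w : ℤ) : ℚ) := by
  have h2 : ∑ u ∈ J, ∑ w ∈ I, G u w = ∑ u ∈ I, ∑ w ∈ J, G u w := by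
    refine Finset.sum_comm.trans ?_
    exact Finset.sum_congr rfl fun u _ => Finset.sum_congr rfl fun w _ => hsym.apply u w
  simp only [fKI_eq, Finset.sum_union h, Finset.sum_add_distrib, h2]
  push_cast
  ring

/-- This is where the characteristic condition enters: it makes `f` integer valued. -/
lemma fKI_int [Fintype V] [DecidableEq V] (G : Matrix V V ℤ) (hsym : G.IsSymm) (K : V → ℤ)
    (hK : IsCharacteristic G K) (I : Finset V) : ∃ n : ℤ, fKI G K I = n := by
  induction I using Finset.induction_on with
  | empty => exact ⟨0, by simp [fKI_eq]⟩
  | insert v s hv ih =>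
    obtain ⟨n, hn⟩ := ih
    obtain ⟨k, hk⟩ := hK v
    refine ⟨k + G v v + n + ∑ w ∈ s, G v w, ?_⟩
    rw [Finset.insert_eq, fKI_union G hsym K (by simpa using hv), hn, fKI_eq,
      show ∑ u ∈ {v}, K u + ∑ u ∈ {v}, ∑ w ∈ {v}, G u w = 2 * (k + G v v) by simp; linarith]
    push_cast [Finset.sum_singleton]
    ring

lemma blowupE_some [DecidableEq V] (G : Matrix V V ℤ) (hsym : G.IsSymm) {v₁ v₂ : V}
    (hne : v₁ ≠ v₂) (hedge : G v₁ v₂ = 1) (x y : V) :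
    blowupE G v₁ v₂ (some x) (some y) =
      G x y - ((if x = v₁ then 1 else 0) + (if x = v₂ then 1 else 0)) *
        ((if y = v₁ then 1 else 0) + (if y = v₂ then 1 else 0)) := by
  have hedge' : G v₂ v₁ = 1 := by rw [hsym.apply]; exact hedge
  simp only [blowupE, Matrix.of_apply]
  by_cases h1 : x = v₁ <;> by_cases h2 : x = v₂ <;> by_cases h3 : y = v₁ <;>
    by_cases h4 : y = v₂ <;> subst_vars <;> simp_all [eq_comm]

/-- The value of `f` in the blow-up on a subset avoiding the new vertex `e`. -/
lemma fKI_blowup [Fintype V] [DecidableEq V] (G : Matrix V V ℤ) (hsym : G.IsSymm) {v₁ v₂ : V}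
    (hne : v₁ ≠ v₂) (hedge : G v₁ v₂ = 1) (K : V → ℤ) (i : ℤ) (I : Finset V) :
    fKI (blowupE G v₁ v₂) (Ktilde v₁ v₂ K i) (I.map (someEmb V)) =
      fKI G K I + ((i * indic v₁ I + i * indic v₂ I - indic v₁ I * indic v₂ I : ℤ) : ℚ) := by
  have hs : ∀ u : V, ∑ x ∈ I, (if x = u then (1 : ℤ) else 0) = indic u I := by
    intro u; simp [indic, Finset.sum_ite_eq']
  have hsq : ∀ u : V, indic u I * indic u I = indic u I := by
    intro u; unfold indic; split_ifs <;> simp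
  have hq : ∑ u ∈ I, ∑ w ∈ I, blowupE G v₁ v₂ (some u) (some w) =
      ∑ u ∈ I, ∑ w ∈ I, G u w - (indic v₁ I + indic v₂ I) * (indic v₁ I + indic v₂ I) := by
    simp only [blowupE_some G hsym hne hedge, Finset.sum_sub_distrib, ← Finset.mul_sum,
      ← Finset.sum_mul, Finset.sum_add_distrib, hs]
  have hk : ∑ u ∈ I, Ktilde v₁ v₂ K i (some u) =
      ∑ u ∈ I, K u + (1 + 2 * i) * (indic v₁ I + indic v₂ I) := by
    rw [← hs v₁, ← hs v₂, ← Finset.sum_add_distrib, Finset.mul_sum, ← Finset.sum_add_distrib]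
    refine Finset.sum_congr rfl fun u _ => ?_
    by_cases h1 : u = v₁ <;> by_cases h2 : u = v₂ <;> simp_all [Ktilde] <;> ring
  have e : (∑ u ∈ I, Ktilde v₁ v₂ K i (some u)) +
      ∑ u ∈ I, ∑ w ∈ I, blowupE G v₁ v₂ (some u) (some w) =
      (∑ u ∈ I, K u + ∑ u ∈ I, ∑ w ∈ I, G u w) +
      2 * (i * indic v₁ I + i * indic v₂ I - indic v₁ I * indic v₂ I) := by
    rw [hq, hk]
    linear_combination - hsq v₁ - hsq v₂
  rw [fKI_eq, fKI_eq]
  simp only [Finset.sum_map, someEmb, Function.Embedding.coeFn_mk]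
  rw [e]
  push_cast
  ring

lemma blowupE_isSymm [DecidableEq V] (G : Matrix V V ℤ) (hsym : G.IsSymm) {v₁ v₂ : V}
    (hne : v₁ ≠ v₂) (hedge : G v₁ v₂ = 1) : (blowupE G v₁ v₂).IsSymm := by
  refine Matrix.IsSymm.ext fun x y => ?_
  rcases x with _ | x <;> rcases y with _ | y
  · rfl
  · rfl
  · rfl
  · rw [blowupE_some G hsym hne hedge, blowupE_some G hsym hne hedge, hsym.apply]
    ring

/-- Adding the new vertex `e` to `I` shifts the value of `f` by `-1 - i` and replaces the
weight `i` on `v₁` and `v₂` by `i + 1`. -/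
lemma fKI_blowup_insert [Fintype V] [DecidableEq V] (G : Matrix V V ℤ) (hsym : G.IsSymm)
    {v₁ v₂ : V} (hne : v₁ ≠ v₂) (hedge : G v₁ v₂ = 1) (K : V → ℤ) (i : ℤ) (I : Finset V) :
    fKI (blowupE G v₁ v₂) (Ktilde v₁ v₂ K i) (insert none (I.map (someEmb V))) =
      (fKI G K I + (((i + 1) * indic v₁ I + (i + 1) * indic v₂ I
        - indic v₁ I * indic v₂ I : ℤ) : ℚ)) + ((-1 - i : ℤ) : ℚ) := by
  have hd : Disjoint ({none} : Finset (Option V)) (I.map (someEmb V)) := by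
    simp [someEmb]
  have hs : ∀ u : V, ∑ x ∈ I, (if x = u then (1 : ℤ) else 0) = indic u I := by
    intro u; simp [indic, Finset.sum_ite_eq']
  have hc : ∑ u ∈ I, blowupE G v₁ v₂ none (some u) = indic v₁ I + indic v₂ I := by
    rw [← hs v₁, ← hs v₂, ← Finset.sum_add_distrib]
    refine Finset.sum_congr rfl fun u _ => ?_
    by_cases h1 : u = v₁ <;> by_cases h2 : u = v₂ <;> simp_all [blowupE]
  rw [Finset.insert_eq, fKI_union _ (blowupE_isSymm G hsym hne hedge) _ hd,
    fKI_blowup G hsym hne hedge, fKI_eq _ _ {none}]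
  simp only [Finset.sum_map, someEmb, Function.Embedding.coeFn_mk, Finset.sum_singleton, hc]
  simp only [Ktilde, blowupE, Matrix.of_apply]
  push_cast
  ring

/-! ### Weighted minima and their increments -/

/-- The minimum of `f([K,I]) + c·[v ∈ I]` over `I ⊆ S`. -/
noncomputable def wmin [Fintype V] [DecidableEq V] (G : Matrix V V ℤ) (K : V → ℤ) (v : V)
    (S : Finset V) (c : ℤ) : ℚ :=
  S.powerset.inf' (Finset.powerset_nonempty _) (fun I => fKI G K I + ((c * indic v I : ℤ) : ℚ))

/-- A minimum over subsets of a disjoint union splits when the function is additive. -/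
lemma inf_powerset_union [DecidableEq V] {S T : Finset V} {f g h : Finset V → ℚ}
    (hf : ∀ I ⊆ S, ∀ J ⊆ T, f (I ∪ J) = g I + h J) :
    (S ∪ T).powerset.inf' (Finset.powerset_nonempty _) f =
      S.powerset.inf' (Finset.powerset_nonempty _) g +
      T.powerset.inf' (Finset.powerset_nonempty _) h := by
  apply le_antisymm
  · obtain ⟨I, hI, eI⟩ := Finset.exists_mem_eq_inf' (Finset.powerset_nonempty S) g
    obtain ⟨J, hJ, eJ⟩ := Finset.exists_mem_eq_inf' (Finset.powerset_nonempty T) h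
    rw [Finset.mem_powerset] at hI hJ
    rw [eI, eJ, ← hf I hI J hJ]
    exact Finset.inf'_le _ (Finset.mem_powerset.2 (Finset.union_subset_union hI hJ))
  · refine Finset.le_inf' _ _ fun L hL => ?_
    rw [Finset.mem_powerset] at hL
    have e : L = (L ∩ S) ∪ (L ∩ T) := by
      rw [← Finset.inter_union_distrib_left, Finset.inter_eq_left.2 hL]
    rw [e, hf _ Finset.inter_subset_right _ Finset.inter_subset_right]
    exact add_le_add
      (Finset.inf'_le _ (Finset.mem_powerset.2 Finset.inter_subset_right))
      (Finset.inf'_le _ (Finset.mem_powerset.2 Finset.inter_subset_right))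

/-- Outside `S` the weight is never seen; this matches the convention `Δ = +∞`. -/
lemma wmin_of_notMem [Fintype V] [DecidableEq V] (G : Matrix V V ℤ) (K : V → ℤ) {v : V}
    {S : Finset V} (hv : v ∉ S) (c d : ℤ) : wmin G K v S c = wmin G K v S d := by
  unfold wmin
  refine Finset.inf'_congr _ rfl fun I hI => ?_
  have : v ∉ I := fun h => hv (Finset.mem_powerset.1 hI h)
  simp [indic, this]

lemma wmin_of_mem [Fintype V] [DecidableEq V] (G : Matrix V V ℤ) (K : V → ℤ) {v : V}
    {S : Finset V} (hv : v ∈ S) (c : ℤ) :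
    wmin G K v S c = min (Av G K v S) (Bv G K v S + c) := by
  apply le_antisymm
  · refine le_min ?_ ?_
    · refine Finset.le_inf' _ _ fun I hI => ?_
      rw [Finset.mem_powerset] at hI
      have hvI : v ∉ I := fun h => Finset.notMem_erase v S (hI h)
      refine (Finset.inf'_le _ (Finset.mem_powerset.2
        (hI.trans (Finset.erase_subset _ _)))).trans ?_
      simp [indic, hvI]
    · rw [← sub_le_iff_le_add]
      refine Finset.le_inf' _ _ fun I hI => ?_
      rw [Finset.mem_powerset] at hI
      rw [sub_le_iff_le_add]
      refine (Finset.inf'_le _ (Finset.mem_powerset.2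
        (Finset.insert_subset hv (hI.trans (Finset.erase_subset _ _))))).trans ?_
      simp [indic]
  · refine Finset.le_inf' _ _ fun I hI => ?_
    rw [Finset.mem_powerset] at hI
    by_cases hvI : v ∈ I
    · refine (min_le_right _ _).trans ?_
      have := Finset.inf'_le (s := (S.erase v).powerset) (fun I => fKI G K (insert v I))
        (Finset.mem_powerset.2 (Finset.erase_subset_erase v hI))
      simp only [Finset.insert_erase hvI] at this
      simpa only [indic, if_pos hvI, mul_one, Bv, add_le_add_iff_right] using this
    · refine (min_le_left _ _).trans ?_
      have := Finset.inf'_le (s := (S.erase v).powerset) (fun I => fKI G K I)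
        (Finset.mem_powerset.2 (Finset.subset_erase.2 ⟨hI, hvI⟩))
      simpa only [indic, if_neg hvI, mul_zero, Int.cast_zero, add_zero, Av] using this

/-- Integrality of `f` is used here: `B - A < -i` gives `B + (i + 1) ≤ A`, so both minima are
attained by `B`. -/
lemma wmin_succ_of_lt [Fintype V] [DecidableEq V] (G : Matrix V V ℤ) (hsym : G.IsSymm)
    (K : V → ℤ) (hK : IsCharacteristic G K) {v : V} {S : Finset V} {i : ℤ}
    (h : DeltaTop G K v S < (((-i : ℤ) : ℚ) : WithTop ℚ)) :
    wmin G K v S (i + 1) = wmin G K v S i + 1 := by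
  by_cases hv : v ∈ S
  · rw [DeltaTop, if_pos hv, WithTop.coe_lt_coe] at h
    rw [wmin_of_mem G K hv, wmin_of_mem G K hv]
    obtain ⟨I, -, eI⟩ := Finset.exists_mem_eq_inf' (Finset.powerset_nonempty (S.erase v))
      (fun I => fKI G K I)
    obtain ⟨J, -, eJ⟩ := Finset.exists_mem_eq_inf' (Finset.powerset_nonempty (S.erase v))
      (fun I => fKI G K (insert v I))
    obtain ⟨a, ha⟩ := fKI_int G hsym K hK I
    obtain ⟨b, hb⟩ := fKI_int G hsym K hK (insert v J)
    rw [show Av G K v S = a from eI.trans ha, show Bv G K v S = b from eJ.trans hb] at *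
    have h' : b - a < -i := by exact_mod_cast h
    rw [min_eq_right (by exact_mod_cast (by omega : b + (i + 1) ≤ a)),
      min_eq_right (by exact_mod_cast (by omega : b + i ≤ a))]
    push_cast
    ring
  · simp [DeltaTop, hv] at h

lemma wmin_succ_of_le [Fintype V] [DecidableEq V] (G : Matrix V V ℤ)
    (K : V → ℤ) {v : V} {S : Finset V} {i : ℤ}
    (h : (((-i : ℤ) : ℚ) : WithTop ℚ) ≤ DeltaTop G K v S) :
    wmin G K v S (i + 1) = wmin G K v S i := by
  by_cases hv : v ∈ S
  · rw [DeltaTop, if_pos hv, WithTop.coe_le_coe] at h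
    push_cast at h
    rw [wmin_of_mem G K hv, wmin_of_mem G K hv, min_eq_left, min_eq_left]
    · linarith
    · push_cast; linarith
  · exact wmin_of_notMem G K hv _ _

/-! ### Cutting the forest along an edge -/

/-- The `a`-side of the edge `ab` (vertices whose path to `b` passes through `a`) is closed under
taking neighbours, except for crossing from `a` to `b`. -/
lemma onPath_step {Γ : SimpleGraph V} (hΓ : Γ.IsAcyclic) {a b x y : V} (hab : Γ.Adj a b)
    (hx : onPath Γ x b a) (hxy : Γ.Adj x y) (hne : ¬ (x = a ∧ y = b)) : onPath Γ y b a := by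
  classical
  obtain ⟨p, hp, ha⟩ := hx
  by_cases hy : y ∈ p.support
  · refine ⟨p.dropUntil y hy, hp.dropUntil hy, ?_⟩
    -- By uniqueness of paths, the part of `p` up to `y` is the edge `xy`; hence `a` lies on the
    -- rest of `p`, or `a = x` and then `p` is the edge `ab`, forcing `y = b`.
    have e : p.takeUntil y hy = hxy.toWalk :=
      congrArg Subtype.val ((hΓ.subsingleton_path _ _).elim ⟨_, hp.takeUntil hy⟩ (SimpleGraph.Path.singleton hxy))
    rw [← p.take_spec hy, SimpleGraph.Walk.mem_support_append_iff, e] at ha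
    rcases ha with ha | ha
    · have : a = x ∨ a = y := by simpa using ha
      rcases this with rfl | rfl
      · have e' : p = hab.toWalk :=
          congrArg Subtype.val ((hΓ.subsingleton_path _ _).elim ⟨_, hp⟩ (SimpleGraph.Path.singleton hab))
        have : y = a ∨ y = b := by rw [e'] at hy; simpa using hy
        rcases this with rfl | rfl
        · exact absurd hxy (SimpleGraph.irrefl _)
        · exact absurd ⟨rfl, rfl⟩ hne
      · simp
    · exact ha
  · exact ⟨SimpleGraph.Walk.cons hxy.symm p, hp.cons hy, by simp [ha]⟩

/-- The two sides of an edge of a forest are disjoint. -/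
lemma onPath_disjoint {Γ : SimpleGraph V} (hΓ : Γ.IsAcyclic) {a b x : V} (hab : Γ.Adj a b)
    (h1 : onPath Γ x b a) (h2 : onPath Γ x a b) : False := by
  obtain ⟨p, hp, ha⟩ := h1
  obtain ⟨q, hq, hb⟩ := h2
  exact hΓ.ne_mem_support_of_support_of_adj_of_isPath hp hq hab.symm ha hb

lemma onPath_self {Γ : SimpleGraph V} {a b : V} (hab : Γ.Adj a b) : onPath Γ a b a :=
  ⟨hab.toWalk, (SimpleGraph.Path.singleton hab).2, by simp⟩

lemma graphOf_adj {G : Matrix V V ℤ} (hsym : G.IsSymm) {u w : V} :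
    (graphOf G).Adj u w ↔ u ≠ w ∧ G u w = 1 := by
  simp [graphOf, SimpleGraph.fromRel_adj, hsym.apply u w]

lemma mem_Esub {Γ : SimpleGraph V} {E : Finset V} {u v x : V} :
    x ∈ Esub Γ E u v ↔ x ∈ E ∧ onPath Γ x v u := by
  simp [Esub]

/-- Cutting the edge `v₁v₂` splits the weighted minimum over subsets of `E`: the correction term
`-[v₁ ∈ I][v₂ ∈ I]` cancels the only interaction between the two sides. -/
lemma exists_split [Fintype V] [DecidableEq V]
    (G : Matrix V V ℤ) (hsym : G.IsSymm)
    (hoff : ∀ u w : V, u ≠ w → G u w = 0 ∨ G u w = 1)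
    (hforest : (graphOf G).IsAcyclic)
    {v₁ v₂ : V} (hne : v₁ ≠ v₂) (hedge : G v₁ v₂ = 1) (K : V → ℤ) (E : Finset V) :
    ∃ C : ℚ, ∀ c : ℤ, E.powerset.inf' (Finset.powerset_nonempty _)
      (fun I => fKI G K I +
        ((c * indic v₁ I + c * indic v₂ I - indic v₁ I * indic v₂ I : ℤ) : ℚ)) =
      wmin G K v₁ (Esub (graphOf G) E v₁ v₂) c + (wmin G K v₂ (Esub (graphOf G) E v₂ v₁) c + C) := by
  have hadj : (graphOf G).Adj v₁ v₂ := (graphOf_adj hsym).2 ⟨hne, hedge⟩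
  set E₁ := Esub (graphOf G) E v₁ v₂ with hE₁
  set E₂ := Esub (graphOf G) E v₂ v₁ with hE₂
  set E₃ := E \ (E₁ ∪ E₂) with hE₃
  have m₁ : ∀ x, x ∈ E₁ ↔ x ∈ E ∧ onPath (graphOf G) x v₂ v₁ := fun x => mem_Esub
  have m₂ : ∀ x, x ∈ E₂ ↔ x ∈ E ∧ onPath (graphOf G) x v₁ v₂ := fun x => mem_Esub
  have d₁₂ : ∀ x ∈ E₁, x ∉ E₂ := fun x h1 h2 =>
    onPath_disjoint hforest hadj ((m₁ x).1 h1).2 ((m₂ x).1 h2).2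
  have n₁ : v₁ ∉ E₂ := fun h =>
    onPath_disjoint hforest hadj (onPath_self hadj) ((m₂ _).1 h).2
  have n₂ : v₂ ∉ E₁ := fun h =>
    onPath_disjoint hforest hadj ((m₁ _).1 h).2 (onPath_self hadj.symm)
  have n₁' : v₁ ∉ E₃ := by
    simp only [hE₃, Finset.mem_sdiff, Finset.mem_union, m₁]
    exact fun h => h.2 (Or.inl ⟨h.1, onPath_self hadj⟩)
  have n₂' : v₂ ∉ E₃ := by
    simp only [hE₃, Finset.mem_sdiff, Finset.mem_union, m₂]
    exact fun h => h.2 (Or.inr ⟨h.1, onPath_self hadj.symm⟩)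
  have hEq : E = E₁ ∪ (E₂ ∪ E₃) := by
    ext x
    simp only [hE₃, Finset.mem_union, Finset.mem_sdiff]
    have := m₁ x
    have := m₂ x
    tauto
  have g₁ : ∀ u ∈ E₁, ∀ w ∈ E₂ ∪ E₃,
      G u w = (if u = v₁ then 1 else 0) * (if w = v₂ then 1 else 0) := by
    intro u hu w hw
    have hw1 : w ∉ E₁ := by
      intro h
      rcases Finset.mem_union.1 hw with h' | h'
      · exact d₁₂ w h h'
      · exact (Finset.mem_sdiff.1 h').2 (Finset.mem_union_left _ h)
    have hwE : w ∈ E := by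
      rw [hEq]
      exact Finset.mem_union_right _ hw
    have huw : u ≠ w := fun h => hw1 (h ▸ hu)
    by_cases hc : u = v₁ ∧ w = v₂
    · simp [hc.1, hc.2, hedge]
    · have h0 : G u w = 0 := (hoff u w huw).resolve_right fun h1 => hw1 <| (m₁ w).2
        ⟨hwE, onPath_step hforest hadj ((m₁ u).1 hu).2 ((graphOf_adj hsym).2 ⟨huw, h1⟩) hc⟩
      rw [h0]
      by_cases h1 : u = v₁
      · have h2 : w ≠ v₂ := fun h2 => hc ⟨h1, h2⟩
        simp [h2]
      · simp [h1]
  have g₂ : ∀ u ∈ E₂, ∀ w ∈ E₃, G u w = 0 := by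
    intro u hu w hw
    have hw2 : w ∉ E₂ := fun h => (Finset.mem_sdiff.1 hw).2 (Finset.mem_union_right _ h)
    have hwE : w ∈ E := (Finset.mem_sdiff.1 hw).1
    have huw : u ≠ w := fun h => hw2 (h ▸ hu)
    refine (hoff u w huw).resolve_right fun h1 => hw2 <| (m₂ w).2
      ⟨hwE, onPath_step hforest hadj.symm ((m₂ u).1 hu).2 ((graphOf_adj hsym).2 ⟨huw, h1⟩) ?_⟩
    rintro ⟨-, rfl⟩
    exact n₁' hw
  have D₁ : Disjoint E₁ (E₂ ∪ E₃) := by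
    rw [Finset.disjoint_left]
    intro x hx hx'
    rcases Finset.mem_union.1 hx' with h' | h'
    · exact d₁₂ x hx h'
    · exact (Finset.mem_sdiff.1 h').2 (Finset.mem_union_left _ hx)
  have D₂ : Disjoint E₂ E₃ := by
    rw [Finset.disjoint_left]
    exact fun x hx h' => (Finset.mem_sdiff.1 h').2 (Finset.mem_union_right _ hx)
  have ind0 : ∀ {u : V} {S I : Finset V}, u ∉ S → I ⊆ S → indic u I = 0 :=
    fun hu hI => if_neg fun h => hu (hI h)
  have indU : ∀ {u : V} {I J : Finset V}, Disjoint I J →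
      indic u (I ∪ J) = indic u I + indic u J := by
    intro u I J hd
    have : u ∈ I → u ∉ J := fun h => Finset.disjoint_left.1 hd h
    by_cases h1 : u ∈ I <;> by_cases h2 : u ∈ J
    · exact absurd h2 (this h1)
    all_goals simp [indic, h1, h2]
  refine ⟨E₃.powerset.inf' (Finset.powerset_nonempty _) (fun I => fKI G K I), fun c => ?_⟩
  have s₂ : (E₂ ∪ E₃).powerset.inf' (Finset.powerset_nonempty _)
      (fun J => fKI G K J + ((c * indic v₂ J : ℤ) : ℚ)) =
      wmin G K v₂ E₂ c + E₃.powerset.inf' (Finset.powerset_nonempty _) (fun I => fKI G K I) := by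
    refine inf_powerset_union fun I hI J hJ => ?_
    have hd := Finset.disjoint_of_subset_left hI (Finset.disjoint_of_subset_right hJ D₂)
    have hz : ∑ u ∈ I, ∑ w ∈ J, G u w = 0 :=
      Finset.sum_eq_zero fun u hu => Finset.sum_eq_zero fun w hw => g₂ u (hI hu) w (hJ hw)
    rw [fKI_union G hsym K hd, hz, indU hd, ind0 n₂' hJ]
    push_cast
    ring
  rw [← s₂]
  conv_lhs =>
    simp only [hEq]
  refine inf_powerset_union fun I hI J hJ => ?_
  have hd := Finset.disjoint_of_subset_left hI (Finset.disjoint_of_subset_right hJ D₁)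
  have hz : ∑ u ∈ I, ∑ w ∈ J, G u w = indic v₁ I * indic v₂ J := by
    rw [Finset.sum_congr rfl fun u hu => Finset.sum_congr rfl fun w hw => g₁ u (hI hu) w (hJ hw)]
    simp only [← Finset.mul_sum, ← Finset.sum_mul]
    simp [indic, Finset.sum_ite_eq']
  have hn : v₁ ∉ E₂ ∪ E₃ := by simp [n₁, n₁']
  rw [fKI_union G hsym K hd, hz, indU hd, indU hd, ind0 n₂ hI, ind0 hn hJ]
  push_cast
  ring

/-! ### The formula for `Δ_e` -/

/-- Reindexing a minimum over subsets of `E` inside the blow-up. -/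
lemma inf_powerset_map (E : Finset V) (g : Finset (Option V) → ℚ) :
    (E.map (someEmb V)).powerset.inf' (Finset.powerset_nonempty _) g =
      E.powerset.inf' (Finset.powerset_nonempty _) (fun I => g (I.map (someEmb V))) := by
  apply le_antisymm
  · exact Finset.le_inf' _ _ fun I hI => Finset.inf'_le _
      (Finset.mem_powerset.2 (Finset.map_subset_map.2 (Finset.mem_powerset.1 hI)))
  · refine Finset.le_inf' _ _ fun L hL => ?_
    obtain ⟨I, hI, rfl⟩ := Finset.subset_map_iff.1 (Finset.mem_powerset.1 hL)
    exact Finset.inf'_le (fun I => g (I.map (someEmb V))) (Finset.mem_powerset.2 hI)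

lemma inf_add_const (E : Finset V) (g : Finset V → ℚ) (d : ℚ) :
    E.powerset.inf' (Finset.powerset_nonempty _) (fun I => g I + d) =
      E.powerset.inf' (Finset.powerset_nonempty _) g + d := by
  apply le_antisymm
  · obtain ⟨I, hI, e⟩ := Finset.exists_mem_eq_inf' (Finset.powerset_nonempty E) g
    rw [e]
    exact Finset.inf'_le (fun I => g I + d) hI
  · exact Finset.le_inf' _ _ fun I hI => add_le_add_left (Finset.inf'_le g hI) d

/-- `Δ_e + 1 + i` is the sum of the increments of the weighted minima on the two sides. -/
lemma DeltaE_eq [Fintype V] [DecidableEq V]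
    (G : Matrix V V ℤ) (hsym : G.IsSymm)
    (hoff : ∀ u w : V, u ≠ w → G u w = 0 ∨ G u w = 1)
    (hforest : (graphOf G).IsAcyclic)
    {v₁ v₂ : V} (hne : v₁ ≠ v₂) (hedge : G v₁ v₂ = 1) (K : V → ℤ) (E : Finset V) (i : ℤ) :
    DeltaE G v₁ v₂ K E i = -1 - i +
      (wmin G K v₁ (Esub (graphOf G) E v₁ v₂) (i + 1) - wmin G K v₁ (Esub (graphOf G) E v₁ v₂) i) +
      (wmin G K v₂ (Esub (graphOf G) E v₂ v₁) (i + 1) -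
        wmin G K v₂ (Esub (graphOf G) E v₂ v₁) i) := by
  obtain ⟨C, hC⟩ := exists_split G hsym hoff hforest hne hedge K E
  have he : (insert none (E.map (someEmb V))).erase none = E.map (someEmb V) :=
    Finset.erase_insert (by simp [someEmb])
  unfold DeltaE Bv Av
  simp only [he]
  rw [inf_powerset_map, inf_powerset_map]
  simp only [fKI_blowup G hsym hne hedge, fKI_blowup_insert G hsym hne hedge]
  rw [inf_add_const, hC, hC]
  push_cast
  ring

/-- with `Δ_min` and `Δ_max` the min and max of `Δ_{v₁}^{v₂}[(K,p₁,p₂),E]`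
and `Δ_{v₂}^{v₁}[(K,p₁,p₂),E]` in `ℤ ∪ {+∞}`, one has, for each `i ∈ ℤ`:
`Δ_e[K̃_i, E∪{e}] = 1 − i` if `i < −Δ_max`; `= −i` if `−Δ_max ≤ i < −Δ_min`; and `= −1 − i`
if `−Δ_min ≤ i` (with the convention `−(+∞) = −∞`, i.e. the conditions are expressed as
`Δ_max < −i`, `−i ≤ Δ_max`, `Δ_min < −i`, `−i ≤ Δ_min` in `WithTop ℚ`). -/
theorem blowup_delta_e_computation [Fintype V] [DecidableEq V]
    (G : Matrix V V ℤ) (hsym : G.IsSymm) (hneg : MatNegDef G)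
    (hoff : ∀ u w : V, u ≠ w → G u w = 0 ∨ G u w = 1)
    (hforest : (graphOf G).IsAcyclic)
    (v₁ v₂ : V) (hne : v₁ ≠ v₂) (hedge : G v₁ v₂ = 1)
    (K : V → ℤ) (hK : IsCharacteristic G K) (E : Finset V) :
    ∀ i : ℤ,
      (max (DeltaTop G K v₁ (Esub (graphOf G) E v₁ v₂))
           (DeltaTop G K v₂ (Esub (graphOf G) E v₂ v₁)) < (((-i : ℤ) : ℚ) : WithTop ℚ) →
        DeltaE G v₁ v₂ K E i = ((1 - i : ℤ) : ℚ)) ∧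
      ((((-i : ℤ) : ℚ) : WithTop ℚ) ≤
          max (DeltaTop G K v₁ (Esub (graphOf G) E v₁ v₂))
              (DeltaTop G K v₂ (Esub (graphOf G) E v₂ v₁)) →
        min (DeltaTop G K v₁ (Esub (graphOf G) E v₁ v₂))
            (DeltaTop G K v₂ (Esub (graphOf G) E v₂ v₁)) < (((-i : ℤ) : ℚ) : WithTop ℚ) →
        DeltaE G v₁ v₂ K E i = ((-i : ℤ) : ℚ)) ∧
      ((((-i : ℤ) : ℚ) : WithTop ℚ) ≤
          min (DeltaTop G K v₁ (Esub (graphOf G) E v₁ v₂))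
              (DeltaTop G K v₂ (Esub (graphOf G) E v₂ v₁)) →
        DeltaE G v₁ v₂ K E i = ((-1 - i : ℤ) : ℚ)) := by
  intro i
  have key := DeltaE_eq G hsym hoff hforest hne hedge K E i
  refine ⟨fun h => ?_, fun h h' => ?_, fun h => ?_⟩
  · rw [max_lt_iff] at h
    rw [key, wmin_succ_of_lt G hsym K hK h.1, wmin_succ_of_lt G hsym K hK h.2]
    push_cast
    ring
  · rcases le_max_iff.1 h with h1 | h1 <;> rcases min_lt_iff.1 h' with h2 | h2
    · exact absurd h1 (not_le.2 h2)
    · rw [key, wmin_succ_of_le G K h1, wmin_succ_of_lt G hsym K hK h2]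
      push_cast
      ring
    · rw [key, wmin_succ_of_le G K h1, wmin_succ_of_lt G hsym K hK h2]
      push_cast
      ring
    · exact absurd h1 (not_le.2 h2)
  · rw [le_min_iff] at h
    rw [key, wmin_succ_of_le G K h.1, wmin_succ_of_le G K h.2]
    push_cast
    ring
end
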